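/- Let J = q_0 Π_0 ρ_{0,L} Π_0 + q_1 Π_1 ρ_{1,L} Π_1 with q_0 + q_1 = 1, q_i ≥ 0, where Π_i are the eigenprojectors of Z⊗Z and ρ_{i,L} are logical encodings of single-qubit states ρ_i into the respective eigenspaces. Then the stabilizer robustness is additive over the blocks: R_F(J) = q_0 R_F(ρ_0) + q_1 R_F(ρ_1). -/

import Mathlib

open Matrix BigOperators Kronecker
open scoped ComplexOrder

noncomputable section

def sigmaX : Matrix (Fin 2) (Fin 2) ℂ := !![0, 1; 1, 0]
def sigmaY : Matrix (Fin 2) (Fin 2) ℂ := !![0, -Complex.I; Complex.I, 0]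
def sigmaZ : Matrix (Fin 2) (Fin 2) ℂ := !![1, 0; 0, -1]

def IsStab1 (σ : Matrix (Fin 2) (Fin 2) ℂ) : Prop :=
  ∃ a b c : ℝ, |a| + |b| + |c| ≤ 1 ∧
    σ = (1/2 : ℂ) • (1 + (a : ℂ) • sigmaX + (b : ℂ) • sigmaY + (c : ℂ) • sigmaZ)

def Rob1 (ρ : Matrix (Fin 2) (Fin 2) ℂ) : ℝ :=
  sInf {l : ℝ | 1 ≤ l ∧ ∃ s, IsStab1 s ∧ ((l : ℂ) • s - ρ).PosSemidef}

def pauliMat : Fin 4 → Matrix (Fin 2) (Fin 2) ℂ :=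
  ![1, sigmaX, sigmaY, sigmaZ]

def signedPauli2 (s : Bool) (a b : Fin 4) :
    Matrix (Fin 2 × Fin 2) (Fin 2 × Fin 2) ℂ :=
  (if s then (-1 : ℂ) else 1) • (pauliMat a ⊗ₖ pauliMat b)

def IsPureStab2 (σ : Matrix (Fin 2 × Fin 2) (Fin 2 × Fin 2) ℂ) : Prop :=
  ∃ (s₁ s₂ : Bool) (a₁ b₁ a₂ b₂ : Fin 4),
    signedPauli2 s₁ a₁ b₁ * signedPauli2 s₂ a₂ b₂
      = signedPauli2 s₂ a₂ b₂ * signedPauli2 s₁ a₁ b₁ ∧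
    σ = (1/4 : ℂ) • ((1 + signedPauli2 s₁ a₁ b₁) * (1 + signedPauli2 s₂ a₂ b₂)) ∧
    σ.trace = 1

def IsStab2 (σ : Matrix (Fin 2 × Fin 2) (Fin 2 × Fin 2) ℂ) : Prop :=
  σ ∈ convexHull ℝ {τ | IsPureStab2 τ}

def Rob2 (ρ : Matrix (Fin 2 × Fin 2) (Fin 2 × Fin 2) ℂ) : ℝ :=
  sInf {l : ℝ | 1 ≤ l ∧ ∃ s, IsStab2 s ∧ ((l : ℂ) • s - ρ).PosSemidef}

/-- Eigenprojectors of `Z⊗Z`: `Π₀ = (II + ZZ)/2`, `Π₁ = (II − ZZ)/2`. -/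
def PiZZ : Fin 2 → Matrix (Fin 2 × Fin 2) (Fin 2 × Fin 2) ℂ :=
  ![(1/2 : ℂ) • (1 + sigmaZ ⊗ₖ sigmaZ), (1/2 : ℂ) • (1 - sigmaZ ⊗ₖ sigmaZ)]

/-- Logical encoding of `ρ = (1/2)(I + xX + yY)` into block `i` of `Z⊗Z`. -/
def encBlock (i : Fin 2) (x y : ℝ) : Matrix (Fin 2 × Fin 2) (Fin 2 × Fin 2) ℂ :=
  PiZZ i * ((1/2 : ℂ) • (1 + (x : ℂ) • (sigmaX ⊗ₖ sigmaX)
    + (y : ℂ) • (sigmaY ⊗ₖ sigmaX))) * PiZZ i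

/-- Basis labels of the eigenspace of `Z⊗Z` with eigenvalue `(-1) ^ i`. -/
def blockIndex (i k : Fin 2) : Fin 2 × Fin 2 := (k, k + i)

/-- The `(i, j)` block of a two-qubit matrix with respect to the eigenspaces of `Z⊗Z`. -/
def zzBlock (i j : Fin 2) (M : Matrix (Fin 2 × Fin 2) (Fin 2 × Fin 2) ℂ) :
    Matrix (Fin 2) (Fin 2) ℂ :=
  M.submatrix (blockIndex i) (blockIndex j)

/-- The isometry onto the eigenspace of `Z⊗Z` with eigenvalue `(-1) ^ i`. -/
def blockIsometry (i : Fin 2) : Matrix (Fin 2 × Fin 2) (Fin 2) ℂ :=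
  (1 : Matrix (Fin 2 × Fin 2) (Fin 2 × Fin 2) ℂ).submatrix id (blockIndex i)

/-- A one-qubit matrix placed in the `i`-th eigenspace of `Z⊗Z`. -/
def blockEmbed (i : Fin 2) (M : Matrix (Fin 2) (Fin 2) ℂ) :
    Matrix (Fin 2 × Fin 2) (Fin 2 × Fin 2) ℂ :=
  blockIsometry i * M * (blockIsometry i)ᴴ

/-- The Hermitian matrix with Pauli coordinates `t, a, b, c`. -/
def blochMat (t a b c : ℝ) : Matrix (Fin 2) (Fin 2) ℂ :=
  (1/2 : ℂ) • ((t : ℂ) • 1 + (a : ℂ) • sigmaX + (b : ℂ) • sigmaY + (c : ℂ) • sigmaZ)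

lemma zzBlock_mul (i j : Fin 2) (M N : Matrix (Fin 2 × Fin 2) (Fin 2 × Fin 2) ℂ) :
    zzBlock i j (M * N) =
      zzBlock i i M * zzBlock i j N + zzBlock i (i + 1) M * zzBlock (i + 1) j N := by
  ext k l
  fin_cases i <;>
    simp [zzBlock, blockIndex, Matrix.mul_apply, Fintype.sum_prod_type] <;> ring

lemma zzBlock_one (i : Fin 2) : zzBlock i i 1 = 1 := by
  ext k l
  fin_cases k <;> fin_cases l <;> simp [zzBlock, blockIndex, Matrix.one_apply]

lemma zzBlock_pauliMat_kronecker (i : Fin 2) (a b : Fin 4) :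
    zzBlock i i (pauliMat a ⊗ₖ pauliMat b) = 0 ∨
      (zzBlock i (i + 1) (pauliMat a ⊗ₖ pauliMat b) = 0 ∧
        zzBlock (i + 1) i (pauliMat a ⊗ₖ pauliMat b) = 0 ∧
        ∃ (u : Bool) (c : Fin 4),
          zzBlock i i (pauliMat a ⊗ₖ pauliMat b) = (if u then (-1 : ℂ) else 1) • pauliMat c) := by
  fin_cases i <;> fin_cases a <;> fin_cases b
  · refine .inr ⟨?_, ?_, false, 0, ?_⟩ <;> (ext k l; fin_cases k <;> fin_cases l <;>
      simp [zzBlock, blockIndex, pauliMat, Matrix.one_apply])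
  · left; ext k l; fin_cases k <;> fin_cases l <;>
      simp [zzBlock, blockIndex, pauliMat, sigmaX, sigmaY, sigmaZ]
  · left; ext k l; fin_cases k <;> fin_cases l <;>
      simp [zzBlock, blockIndex, pauliMat, sigmaX, sigmaY, sigmaZ]
  · refine .inr ⟨?_, ?_, false, 3, ?_⟩ <;> (ext k l; fin_cases k <;> fin_cases l <;>
      simp [zzBlock, blockIndex, pauliMat, sigmaX, sigmaY, sigmaZ])
  · left; ext k l; fin_cases k <;> fin_cases l <;>
      simp [zzBlock, blockIndex, pauliMat, sigmaX, sigmaY, sigmaZ]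
  · refine .inr ⟨?_, ?_, false, 1, ?_⟩ <;> (ext k l; fin_cases k <;> fin_cases l <;>
      simp [zzBlock, blockIndex, pauliMat, sigmaX, sigmaY, sigmaZ])
  · refine .inr ⟨?_, ?_, false, 2, ?_⟩ <;> (ext k l; fin_cases k <;> fin_cases l <;>
      simp [zzBlock, blockIndex, pauliMat, sigmaX, sigmaY, sigmaZ])
  · left; ext k l; fin_cases k <;> fin_cases l <;>
      simp [zzBlock, blockIndex, pauliMat, sigmaX, sigmaY, sigmaZ]
  · left; ext k l; fin_cases k <;> fin_cases l <;>
      simp [zzBlock, blockIndex, pauliMat, sigmaX, sigmaY, sigmaZ]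
  · refine .inr ⟨?_, ?_, false, 2, ?_⟩ <;> (ext k l; fin_cases k <;> fin_cases l <;>
      simp [zzBlock, blockIndex, pauliMat, sigmaX, sigmaY, sigmaZ])
  · refine .inr ⟨?_, ?_, true, 1, ?_⟩ <;> (ext k l; fin_cases k <;> fin_cases l <;>
      simp [zzBlock, blockIndex, pauliMat, sigmaX, sigmaY, sigmaZ])
  · left; ext k l; fin_cases k <;> fin_cases l <;>
      simp [zzBlock, blockIndex, pauliMat, sigmaX, sigmaY, sigmaZ]
  · refine .inr ⟨?_, ?_, false, 3, ?_⟩ <;> (ext k l; fin_cases k <;> fin_cases l <;>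
      simp [zzBlock, blockIndex, pauliMat, sigmaX, sigmaY, sigmaZ])
  · left; ext k l; fin_cases k <;> fin_cases l <;>
      simp [zzBlock, blockIndex, pauliMat, sigmaX, sigmaY, sigmaZ]
  · left; ext k l; fin_cases k <;> fin_cases l <;>
      simp [zzBlock, blockIndex, pauliMat, sigmaX, sigmaY, sigmaZ]
  · refine .inr ⟨?_, ?_, false, 0, ?_⟩ <;> (ext k l; fin_cases k <;> fin_cases l <;>
      simp [zzBlock, blockIndex, pauliMat, sigmaZ])
  · refine .inr ⟨?_, ?_, false, 0, ?_⟩ <;> (ext k l; fin_cases k <;> fin_cases l <;>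
      simp [zzBlock, blockIndex, pauliMat, Matrix.one_apply])
  · left; ext k l; fin_cases k <;> fin_cases l <;>
      simp [zzBlock, blockIndex, pauliMat, sigmaX, sigmaY, sigmaZ]
  · left; ext k l; fin_cases k <;> fin_cases l <;>
      simp [zzBlock, blockIndex, pauliMat, sigmaX, sigmaY, sigmaZ]
  · refine .inr ⟨?_, ?_, true, 3, ?_⟩ <;> (ext k l; fin_cases k <;> fin_cases l <;>
      simp [zzBlock, blockIndex, pauliMat, sigmaX, sigmaY, sigmaZ])
  · left; ext k l; fin_cases k <;> fin_cases l <;>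
      simp [zzBlock, blockIndex, pauliMat, sigmaX, sigmaY, sigmaZ]
  · refine .inr ⟨?_, ?_, false, 1, ?_⟩ <;> (ext k l; fin_cases k <;> fin_cases l <;>
      simp [zzBlock, blockIndex, pauliMat, sigmaX, sigmaY, sigmaZ])
  · refine .inr ⟨?_, ?_, true, 2, ?_⟩ <;> (ext k l; fin_cases k <;> fin_cases l <;>
      simp [zzBlock, blockIndex, pauliMat, sigmaX, sigmaY, sigmaZ])
  · left; ext k l; fin_cases k <;> fin_cases l <;>
      simp [zzBlock, blockIndex, pauliMat, sigmaX, sigmaY, sigmaZ]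
  · left; ext k l; fin_cases k <;> fin_cases l <;>
      simp [zzBlock, blockIndex, pauliMat, sigmaX, sigmaY, sigmaZ]
  · refine .inr ⟨?_, ?_, false, 2, ?_⟩ <;> (ext k l; fin_cases k <;> fin_cases l <;>
      simp [zzBlock, blockIndex, pauliMat, sigmaX, sigmaY, sigmaZ])
  · refine .inr ⟨?_, ?_, false, 1, ?_⟩ <;> (ext k l; fin_cases k <;> fin_cases l <;>
      simp [zzBlock, blockIndex, pauliMat, sigmaX, sigmaY, sigmaZ])
  · left; ext k l; fin_cases k <;> fin_cases l <;>
      simp [zzBlock, blockIndex, pauliMat, sigmaX, sigmaY, sigmaZ]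
  · refine .inr ⟨?_, ?_, false, 3, ?_⟩ <;> (ext k l; fin_cases k <;> fin_cases l <;>
      simp [zzBlock, blockIndex, pauliMat, sigmaX, sigmaY, sigmaZ])
  · left; ext k l; fin_cases k <;> fin_cases l <;>
      simp [zzBlock, blockIndex, pauliMat, sigmaX, sigmaY, sigmaZ]
  · left; ext k l; fin_cases k <;> fin_cases l <;>
      simp [zzBlock, blockIndex, pauliMat, sigmaX, sigmaY, sigmaZ]
  · refine .inr ⟨?_, ?_, true, 0, ?_⟩ <;> (ext k l; fin_cases k <;> fin_cases l <;>
      simp [zzBlock, blockIndex, pauliMat, sigmaX, sigmaY, sigmaZ])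

lemma zzBlock_smul (i j : Fin 2) (r : ℂ) (M : Matrix (Fin 2 × Fin 2) (Fin 2 × Fin 2) ℂ) :
    zzBlock i j (r • M) = r • zzBlock i j M := rfl

lemma zzBlock_add (i j : Fin 2) (M N : Matrix (Fin 2 × Fin 2) (Fin 2 × Fin 2) ℂ) :
    zzBlock i j (M + N) = zzBlock i j M + zzBlock i j N := rfl

lemma zzBlock_sub (i j : Fin 2) (M N : Matrix (Fin 2 × Fin 2) (Fin 2 × Fin 2) ℂ) :
    zzBlock i j (M - N) = zzBlock i j M - zzBlock i j N := rfl

lemma zzBlock_signedPauli2 (i : Fin 2) (s : Bool) (a b : Fin 4) :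
    zzBlock i i (signedPauli2 s a b) = 0 ∨
      (zzBlock i (i + 1) (signedPauli2 s a b) = 0 ∧
        zzBlock (i + 1) i (signedPauli2 s a b) = 0 ∧
        ∃ (u : Bool) (c : Fin 4),
          zzBlock i i (signedPauli2 s a b) = (if u then (-1 : ℂ) else 1) • pauliMat c) := by
  simp only [signedPauli2, zzBlock_smul]
  rcases zzBlock_pauliMat_kronecker i a b with h | ⟨h₁, h₂, u, c, h⟩
  · left; rw [h, smul_zero]
  · refine .inr ⟨by rw [h₁, smul_zero], by rw [h₂, smul_zero], xor s u, c, ?_⟩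
    rw [h, smul_smul]
    cases s <;> cases u <;> simp

lemma pauliMat_isHermitian (a : Fin 4) : (pauliMat a).IsHermitian := by
  ext k l
  fin_cases a <;> fin_cases k <;> fin_cases l <;> simp [pauliMat, sigmaX, sigmaY, sigmaZ]

lemma pauliMat_mul_self (a : Fin 4) : pauliMat a * pauliMat a = 1 := by
  ext k l
  fin_cases a <;> fin_cases k <;> fin_cases l <;> simp [pauliMat, sigmaX, sigmaY, sigmaZ]

lemma exists_pauliMat_mul (a b : Fin 4) :
    ∃ (w : ℂ) (c : Fin 4), w ^ 4 = 1 ∧ pauliMat a * pauliMat b = w • pauliMat c := by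
  have hX : sigmaX * sigmaX = 1 := pauliMat_mul_self 1
  have hY : sigmaY * sigmaY = 1 := pauliMat_mul_self 2
  have hZ : sigmaZ * sigmaZ = 1 := pauliMat_mul_self 3
  have hXY : sigmaX * sigmaY = Complex.I • sigmaZ := by
    ext k l; fin_cases k <;> fin_cases l <;> simp [sigmaX, sigmaY, sigmaZ]
  have hYX : sigmaY * sigmaX = (-Complex.I) • sigmaZ := by
    ext k l; fin_cases k <;> fin_cases l <;> simp [sigmaX, sigmaY, sigmaZ]
  have hYZ : sigmaY * sigmaZ = Complex.I • sigmaX := by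
    ext k l; fin_cases k <;> fin_cases l <;> simp [sigmaX, sigmaY, sigmaZ]
  have hZY : sigmaZ * sigmaY = (-Complex.I) • sigmaX := by
    ext k l; fin_cases k <;> fin_cases l <;> simp [sigmaX, sigmaY, sigmaZ]
  have hZX : sigmaZ * sigmaX = Complex.I • sigmaY := by
    ext k l; fin_cases k <;> fin_cases l <;> simp [sigmaX, sigmaY, sigmaZ]
  have hXZ : sigmaX * sigmaZ = (-Complex.I) • sigmaY := by
    ext k l; fin_cases k <;> fin_cases l <;> simp [sigmaX, sigmaY, sigmaZ]
  have hI : Complex.I ^ 4 = 1 := Complex.I_pow_four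
  have hI' : (-Complex.I) ^ 4 = 1 := by rw [Even.neg_pow (by decide), hI]
  fin_cases a <;> fin_cases b
  · exact ⟨1, 0, by simp, by simp [pauliMat]⟩
  · exact ⟨1, 1, by simp, by simp [pauliMat]⟩
  · exact ⟨1, 2, by simp, by simp [pauliMat]⟩
  · exact ⟨1, 3, by simp, by simp [pauliMat]⟩
  · exact ⟨1, 1, by simp, by simp [pauliMat]⟩
  · exact ⟨1, 0, by simp, by simp [pauliMat, hX]⟩
  · exact ⟨_, 3, hI, hXY⟩
  · exact ⟨_, 2, hI', hXZ⟩
  · exact ⟨1, 2, by simp, by simp [pauliMat]⟩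
  · exact ⟨_, 3, hI', hYX⟩
  · exact ⟨1, 0, by simp, by simp [pauliMat, hY]⟩
  · exact ⟨_, 1, hI, hYZ⟩
  · exact ⟨1, 3, by simp, by simp [pauliMat]⟩
  · exact ⟨_, 2, hI, hZX⟩
  · exact ⟨_, 1, hI', hZY⟩
  · exact ⟨1, 0, by simp, by simp [pauliMat, hZ]⟩

lemma pauliMat_kronecker_isHermitian (a b : Fin 4) :
    (pauliMat a ⊗ₖ pauliMat b).IsHermitian := by
  rw [Matrix.IsHermitian, Matrix.conjTranspose_kronecker, pauliMat_isHermitian,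
    pauliMat_isHermitian]

lemma pauliMat_kronecker_ne_zero (a b : Fin 4) : pauliMat a ⊗ₖ pauliMat b ≠ 0 := by
  intro h
  have h2 : (pauliMat a ⊗ₖ pauliMat b) * (pauliMat a ⊗ₖ pauliMat b) = 1 := by
    rw [← Matrix.mul_kronecker_mul, pauliMat_mul_self, pauliMat_mul_self,
      Matrix.one_kronecker_one]
  rw [h, zero_mul] at h2
  exact zero_ne_one h2

lemma signedPauli2_isHermitian (s : Bool) (a b : Fin 4) : (signedPauli2 s a b).IsHermitian := by
  rw [Matrix.IsHermitian, signedPauli2, Matrix.conjTranspose_smul,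
    pauliMat_kronecker_isHermitian]
  cases s <;> simp

lemma eq_one_or_neg_one_of_star_eq {w : ℂ} (h4 : w ^ 4 = 1) (hs : star w = w) :
    w = 1 ∨ w = -1 := by
  have hr : ((w.re : ℝ) : ℂ) = w := Complex.conj_eq_iff_re.mp hs
  have h4' : w.re ^ 4 = 1 := by rw [← hr] at h4; exact_mod_cast h4
  have h2 : w.re ^ 2 = 1 := by nlinarith [sq_nonneg w.re, sq_nonneg (w.re ^ 2 - 1)]
  rcases sq_eq_sq_iff_eq_or_eq_neg.mp (h2.trans (one_pow 2).symm) with h | h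
  · left; rw [← hr, h]; simp
  · right; rw [← hr, h]; simp

lemma exists_signedPauli2_mul {s₁ s₂ : Bool} {a₁ b₁ a₂ b₂ : Fin 4}
    (h : Commute (signedPauli2 s₁ a₁ b₁) (signedPauli2 s₂ a₂ b₂)) :
    ∃ (s : Bool) (a b : Fin 4),
      signedPauli2 s₁ a₁ b₁ * signedPauli2 s₂ a₂ b₂ = signedPauli2 s a b := by
  obtain ⟨w, c, hw, hc⟩ := exists_pauliMat_mul a₁ a₂
  obtain ⟨v, d, hv, hd⟩ := exists_pauliMat_mul b₁ b₂
  set ε : ℂ := (if s₁ then (-1 : ℂ) else 1) * (if s₂ then (-1 : ℂ) else 1) * (w * v) with hε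
  have hε4 : ε ^ 4 = 1 := by
    rw [hε, mul_pow, mul_pow, mul_pow w v, hw, hv]
    cases s₁ <;> cases s₂ <;> norm_num
  have hmul : signedPauli2 s₁ a₁ b₁ * signedPauli2 s₂ a₂ b₂ =
      ε • (pauliMat c ⊗ₖ pauliMat d) := by
    rw [signedPauli2, signedPauli2, smul_mul_smul_comm, ← Matrix.mul_kronecker_mul, hc, hd,
      Matrix.smul_kronecker, Matrix.kronecker_smul, smul_smul, smul_smul, hε, mul_assoc]
  have hherm : (signedPauli2 s₁ a₁ b₁ * signedPauli2 s₂ a₂ b₂).IsHermitian := by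
    rw [Matrix.IsHermitian, Matrix.conjTranspose_mul, signedPauli2_isHermitian,
      signedPauli2_isHermitian, h.eq]
  have hstar : star ε = ε := by
    rw [hmul, Matrix.IsHermitian, Matrix.conjTranspose_smul,
      pauliMat_kronecker_isHermitian] at hherm
    exact smul_left_injective ℂ (pauliMat_kronecker_ne_zero c d) hherm
  rcases eq_one_or_neg_one_of_star_eq hε4 hstar with h1 | h1
  · exact ⟨false, c, d, by rw [hmul, h1]; simp [signedPauli2]⟩
  · exact ⟨true, c, d, by rw [hmul, h1]; simp [signedPauli2]⟩

/-- The cone generated by the one-qubit stabilizer states. -/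
def stabCone : Set (Matrix (Fin 2) (Fin 2) ℂ) :=
  {M | ∃ t a b c : ℝ, |a| + |b| + |c| ≤ t ∧ M = blochMat t a b c}

lemma add_mem_stabCone {M N : Matrix (Fin 2) (Fin 2) ℂ} (hM : M ∈ stabCone)
    (hN : N ∈ stabCone) : M + N ∈ stabCone := by
  obtain ⟨t, a, b, c, h, rfl⟩ := hM
  obtain ⟨t', a', b', c', h', rfl⟩ := hN
  refine ⟨t + t', a + a', b + b', c + c', ?_, ?_⟩
  · linarith [abs_add_le a a', abs_add_le b b', abs_add_le c c']
  · simp only [blochMat]; push_cast; module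

lemma smul_blochMat (r t a b c : ℝ) :
    (r : ℂ) • blochMat t a b c = blochMat (r * t) (r * a) (r * b) (r * c) := by
  simp only [blochMat]; push_cast; module

lemma smul_mem_stabCone {M : Matrix (Fin 2) (Fin 2) ℂ} {r : ℝ} (hr : 0 ≤ r)
    (hM : M ∈ stabCone) : (r : ℂ) • M ∈ stabCone := by
  obtain ⟨t, a, b, c, h, rfl⟩ := hM
  refine ⟨r * t, r * a, r * b, r * c, ?_, smul_blochMat r t a b c⟩
  rw [abs_mul, abs_mul, abs_mul, abs_of_nonneg hr]
  nlinarith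

lemma one_add_smul_pauliMat_mem_stabCone (u : Bool) (c : Fin 4) :
    1 + (if u then (-1 : ℂ) else 1) • pauliMat c ∈ stabCone := by
  fin_cases c <;> cases u
  · exact ⟨4, 0, 0, 0, by simp, by simp [blochMat, pauliMat]; module⟩
  · exact ⟨0, 0, 0, 0, by simp, by simp [blochMat, pauliMat]⟩
  · exact ⟨2, 2, 0, 0, by simp, by simp [blochMat, pauliMat]⟩
  · exact ⟨2, -2, 0, 0, by simp, by simp [blochMat, pauliMat]⟩
  · exact ⟨2, 0, 2, 0, by simp, by simp [blochMat, pauliMat]⟩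
  · exact ⟨2, 0, -2, 0, by simp, by simp [blochMat, pauliMat]⟩
  · exact ⟨2, 0, 0, 2, by simp, by simp [blochMat, pauliMat]⟩
  · exact ⟨2, 0, 0, -2, by simp, by simp [blochMat, pauliMat]⟩

lemma not_commute_pauliMat {c d : Fin 4} (hc : c ≠ 0) (hd : d ≠ 0) (hcd : c ≠ d) :
    ¬ Commute (pauliMat c) (pauliMat d) := by
  intro h
  have h00 := congrFun (congrFun h.eq 0) 0
  have h01 := congrFun (congrFun h.eq 0) 1
  fin_cases c <;> fin_cases d <;>
    simp [pauliMat, sigmaX, sigmaY, sigmaZ, Complex.ext_iff] at hc hd hcd h00 h01 <;>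
    (revert h00 h01; norm_num)

lemma one_add_mul_one_add_mem_stabCone (u v : Bool) (c d : Fin 4)
    (h : Commute ((if u then (-1 : ℂ) else 1) • pauliMat c)
      ((if v then (-1 : ℂ) else 1) • pauliMat d)) :
    (1 + (if u then (-1 : ℂ) else 1) • pauliMat c) *
      (1 + (if v then (-1 : ℂ) else 1) • pauliMat d) ∈ stabCone := by
  have hzero : (0 : Matrix (Fin 2) (Fin 2) ℂ) ∈ stabCone :=
    ⟨0, 0, 0, 0, by simp, by simp [blochMat]⟩
  have htwo (w : Bool) (e : Fin 4) :
      (2 : ℂ) • (1 + (if w then (-1 : ℂ) else 1) • pauliMat e) ∈ stabCone := by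
    exact_mod_cast smul_mem_stabCone (r := 2) (by norm_num)
      (one_add_smul_pauliMat_mem_stabCone w e)
  by_cases hc : c = 0
  · subst hc
    cases u
    · convert htwo v d using 1
      have h0 : (if false then (-1 : ℂ) else 1) • pauliMat 0 = 1 := by simp [pauliMat]
      rw [h0, one_add_one_eq_two, two_smul, two_mul]
    · simpa [pauliMat] using hzero
  by_cases hd : d = 0
  · subst hd
    cases v
    · convert htwo u c using 1
      have h0 : (if false then (-1 : ℂ) else 1) • pauliMat 0 = 1 := by simp [pauliMat]
      rw [h0, one_add_one_eq_two, two_smul, mul_two]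
    · simpa [pauliMat] using hzero
  by_cases hcd : c = d
  · subst hcd
    have hP := pauliMat_mul_self c
    cases u <;> cases v
    · convert htwo false c using 1
      simp only [Bool.false_eq_true, if_false, one_smul, mul_add, add_mul, mul_one, one_mul, hP]
      module
    · convert hzero using 1
      simp [mul_add, add_mul, hP]
      abel
    · convert hzero using 1
      simp [mul_add, add_mul, hP]
    · convert htwo true c using 1
      simp only [if_true, neg_smul, one_smul, mul_add, add_mul, mul_one, one_mul, neg_mul_neg, hP]
      module
  · refine absurd ?_ (not_commute_pauliMat hc hd hcd)
    cases u <;> cases v <;> simpa using h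

lemma IsPureStab2.zzBlock_mem_stabCone {σ : Matrix (Fin 2 × Fin 2) (Fin 2 × Fin 2) ℂ}
    (h : IsPureStab2 σ) (i : Fin 2) : zzBlock i i σ ∈ stabCone := by
  obtain ⟨s₁, s₂, a₁, b₁, a₂, b₂, hcomm, rfl, -⟩ := h
  obtain ⟨s, a, b, hmul⟩ := exists_signedPauli2_mul hcomm
  suffices hs : zzBlock i i ((1 + signedPauli2 s₁ a₁ b₁) * (1 + signedPauli2 s₂ a₂ b₂)) ∈
      stabCone by
    rw [zzBlock_smul]
    simpa using smul_mem_stabCone (r := 1/4) (by norm_num) hs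
  have hexp : zzBlock i i ((1 + signedPauli2 s₁ a₁ b₁) * (1 + signedPauli2 s₂ a₂ b₂)) =
      1 + zzBlock i i (signedPauli2 s₁ a₁ b₁) + zzBlock i i (signedPauli2 s₂ a₂ b₂) +
        zzBlock i i (signedPauli2 s₁ a₁ b₁ * signedPauli2 s₂ a₂ b₂) := by
    simp only [mul_add, add_mul, mul_one, one_mul, zzBlock_add, zzBlock_one]
    abel
  have hprod := zzBlock_mul i i (signedPauli2 s₁ a₁ b₁) (signedPauli2 s₂ a₂ b₂)
  have hprod' := zzBlock_mul i i (signedPauli2 s₂ a₂ b₂) (signedPauli2 s₁ a₁ b₁)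
  rcases zzBlock_signedPauli2 i s₁ a₁ b₁ with h₁ | ⟨h₁, h₁', u, c, hu⟩ <;>
    rcases zzBlock_signedPauli2 i s₂ a₂ b₂ with h₂ | ⟨h₂, h₂', v, d, hv⟩
  · rw [hexp, h₁, h₂, add_zero, add_zero, hmul]
    rcases zzBlock_signedPauli2 i s a b with h₃ | ⟨-, -, w, e, hw⟩
    · rw [h₃, add_zero]
      exact ⟨2, 0, 0, 0, by simp, by simp [blochMat]⟩
    · rw [hw]; exact one_add_smul_pauliMat_mem_stabCone w e
  · rw [hexp, hprod, h₁, h₂', hv, zero_mul, mul_zero, add_zero, add_zero, add_zero]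
    exact one_add_smul_pauliMat_mem_stabCone v d
  · rw [hexp, hprod, h₁, h₂, hu, zero_mul, mul_zero, add_zero, add_zero, add_zero]
    exact one_add_smul_pauliMat_mem_stabCone u c
  · rw [h₁, zero_mul, add_zero, hu, hv] at hprod
    rw [h₂, zero_mul, add_zero, hu, hv, ← hcomm, hprod] at hprod'
    have := one_add_mul_one_add_mem_stabCone u v c d hprod'
    convert this using 1
    rw [hexp, hprod, hu, hv]
    simp only [mul_add, add_mul, mul_one, one_mul]
    abel

lemma trace_zzBlock (M : Matrix (Fin 2 × Fin 2) (Fin 2 × Fin 2) ℂ) :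
    (zzBlock 0 0 M).trace + (zzBlock 1 1 M).trace = M.trace := by
  simp [Matrix.trace, zzBlock, blockIndex, Fintype.sum_prod_type]
  ring

lemma trace_blochMat (t a b c : ℝ) : (blochMat t a b c).trace = t := by
  simp [blochMat, Matrix.trace, Fin.sum_univ_two, sigmaX, sigmaY, sigmaZ]
  ring

lemma IsStab2.zzBlock_mem_stabCone {σ : Matrix (Fin 2 × Fin 2) (Fin 2 × Fin 2) ℂ}
    (h : IsStab2 σ) : (∀ i, zzBlock i i σ ∈ stabCone) ∧ σ.trace = 1 := by
  refine convexHull_min (t := {σ | (∀ i, zzBlock i i σ ∈ stabCone) ∧ σ.trace = 1}) ?_ ?_ h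
  · intro τ hτ
    refine ⟨hτ.zzBlock_mem_stabCone, ?_⟩
    obtain ⟨_, _, _, _, _, _, _, _, htr⟩ := hτ
    exact htr
  · rintro τ ⟨hτ, hτt⟩ τ' ⟨hτ', hτt'⟩ r r' hr hr' hrr
    refine ⟨fun i => ?_, ?_⟩
    · exact add_mem_stabCone (smul_mem_stabCone hr (hτ i)) (smul_mem_stabCone hr' (hτ' i))
    · rw [Matrix.trace_add, Matrix.trace_smul, Matrix.trace_smul, hτt, hτt', ← add_smul, hrr,
        one_smul]

/-- A stabilizer-cone element of trace `t` dominating `q • ρ` witnesses `q * Rob1 ρ ≤ t`. -/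
lemma mul_Rob1_le {q t a b c x y : ℝ} (hq : 0 ≤ q) (h : |a| + |b| + |c| ≤ t)
    (hpsd : (blochMat t a b c - (q : ℂ) • blochMat 1 x y 0).PosSemidef) :
    q * Rob1 (blochMat 1 x y 0) ≤ t := by
  rcases hq.eq_or_lt with rfl | hq
  · rw [zero_mul]; exact le_trans (by positivity) h
  have htr := hpsd.trace_nonneg
  rw [Matrix.trace_sub, Matrix.trace_smul, trace_blochMat, trace_blochMat] at htr
  have hqt : q ≤ t := by
    have : (0 : ℂ) ≤ ((t - q : ℝ) : ℂ) := by push_cast; simpa using htr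
    linarith [Complex.zero_le_real.mp this]
  have ht : 0 < t := hq.trans_le hqt
  rw [mul_comm, ← le_div_iff₀ hq]
  refine csInf_le ⟨1, fun _ hl => hl.1⟩ ⟨(one_le_div hq).mpr hqt, blochMat 1 (a/t) (b/t) (c/t),
    ⟨a/t, b/t, c/t, ?_, by simp [blochMat]⟩, ?_⟩
  · rw [abs_div, abs_div, abs_div, abs_of_pos ht, ← add_div, ← add_div]
    exact (div_le_one ht).mpr h
  · have h2 := hpsd.smul (a := ((q⁻¹ : ℝ) : ℂ)) (Complex.zero_le_real.mpr (by positivity))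
    convert h2 using 1
    rw [smul_sub, smul_smul, ← Complex.ofReal_mul, inv_mul_cancel₀ hq.ne', Complex.ofReal_one,
      one_smul, smul_blochMat, smul_blochMat]
    congr 2 <;> field_simp

lemma blockEmbed_apply (i : Fin 2) (M : Matrix (Fin 2) (Fin 2) ℂ) (p r : Fin 2 × Fin 2) :
    blockEmbed i M p r =
      if p.2 = p.1 + i ∧ r.2 = r.1 + i then M p.1 r.1 else 0 := by
  obtain ⟨p, p'⟩ := p
  obtain ⟨r, r'⟩ := r
  have hiso (p p' k : Fin 2) : blockIsometry i (p, p') k = if p = k ∧ p' = k + i then 1 else 0 := by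
    simp [blockIsometry, blockIndex, Matrix.one_apply]
  by_cases h1 : p' = p + i <;> by_cases h2 : r' = r + i <;>
    simp [blockEmbed, Matrix.mul_apply, hiso, ite_and, apply_ite, h1, h2]

lemma PiZZ_eq_diagonal (i : Fin 2) :
    PiZZ i = Matrix.diagonal fun p => if p.2 = p.1 + i then 1 else 0 := by
  ext ⟨p, p'⟩ ⟨r, r'⟩
  fin_cases i <;> fin_cases p <;> fin_cases p' <;> fin_cases r <;> fin_cases r' <;>
    simp [PiZZ, sigmaZ] <;> norm_num

lemma encBlock_eq_blockEmbed (i : Fin 2) (x y : ℝ) :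
    encBlock i x y = blockEmbed i (blochMat 1 x y 0) := by
  ext p r
  rw [encBlock, PiZZ_eq_diagonal, Matrix.mul_diagonal, Matrix.diagonal_mul, blockEmbed_apply]
  obtain ⟨p, p'⟩ := p
  obtain ⟨r, r'⟩ := r
  fin_cases i <;> fin_cases p <;> fin_cases p' <;> fin_cases r <;> fin_cases r' <;>
    simp [blochMat, sigmaX, sigmaY, sigmaZ]

lemma zzBlock_blockEmbed_self (i : Fin 2) (M : Matrix (Fin 2) (Fin 2) ℂ) :
    zzBlock i i (blockEmbed i M) = M := by
  ext k l
  simp [zzBlock, blockEmbed_apply, blockIndex]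

lemma zzBlock_blockEmbed_of_ne {i j : Fin 2} (hij : i ≠ j) (M : Matrix (Fin 2) (Fin 2) ℂ) :
    zzBlock i i (blockEmbed j M) = 0 := by
  ext k l
  simp [zzBlock, blockEmbed_apply, blockIndex, hij]

lemma blockEmbed_add (i : Fin 2) (M N : Matrix (Fin 2) (Fin 2) ℂ) :
    blockEmbed i (M + N) = blockEmbed i M + blockEmbed i N := by
  simp [blockEmbed, Matrix.mul_add, Matrix.add_mul]

lemma blockEmbed_sub (i : Fin 2) (M N : Matrix (Fin 2) (Fin 2) ℂ) :
    blockEmbed i (M - N) = blockEmbed i M - blockEmbed i N := by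
  simp [blockEmbed, Matrix.mul_sub, Matrix.sub_mul]

lemma blockEmbed_smul (i : Fin 2) (r : ℂ) (M : Matrix (Fin 2) (Fin 2) ℂ) :
    blockEmbed i (r • M) = r • blockEmbed i M := by
  simp [blockEmbed]

lemma Matrix.PosSemidef.blockEmbed {M : Matrix (Fin 2) (Fin 2) ℂ} (h : M.PosSemidef)
    (i : Fin 2) : (blockEmbed i M).PosSemidef :=
  h.mul_mul_conjTranspose_same _

/-- One-qubit Pauli eigenstates are encoded as two-qubit stabilizer states. -/
lemma isPureStab2_blockEmbed (i : Fin 2) (u : Bool) (c : Fin 3) :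
    IsPureStab2 (blockEmbed i
      ((1/2 : ℂ) • (1 + (if u then (-1 : ℂ) else 1) • pauliMat c.succ))) := by
  set d : Fin 4 := ![1, 1, 0] c with hd
  have hPi : PiZZ i = (1/2 : ℂ) • (1 + signedPauli2 (i = 1) 3 3) := by
    fin_cases i <;> simp [PiZZ, signedPauli2, pauliMat, sub_eq_add_neg]
  have hcomm : Commute (sigmaZ ⊗ₖ sigmaZ) (pauliMat c.succ ⊗ₖ pauliMat d) := by
    rw [Commute, SemiconjBy, ← Matrix.mul_kronecker_mul, ← Matrix.mul_kronecker_mul]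
    ext ⟨p, p'⟩ ⟨r, r'⟩
    fin_cases c <;> fin_cases p <;> fin_cases p' <;> fin_cases r <;> fin_cases r' <;>
      simp [hd, pauliMat, sigmaX, sigmaY, sigmaZ]
  have heq : blockEmbed i ((1/2 : ℂ) • (1 + (if u then (-1 : ℂ) else 1) • pauliMat c.succ)) =
      (1/4 : ℂ) • ((1 + signedPauli2 (i = 1) 3 3) * (1 + signedPauli2 u c.succ d)) := by
    have h4 : (1/4 : ℂ) • ((1 + signedPauli2 (i = 1) 3 3) * (1 + signedPauli2 u c.succ d)) =
        (1/2 : ℂ) • (PiZZ i * (1 + signedPauli2 u c.succ d)) := by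
      rw [hPi, smul_mul_assoc, smul_smul]; norm_num
    rw [h4, PiZZ_eq_diagonal]
    ext ⟨p, p'⟩ ⟨r, r'⟩
    rw [Matrix.smul_apply, Matrix.diagonal_mul, blockEmbed_apply, signedPauli2]
    generalize (if u then (-1 : ℂ) else 1) = ε
    fin_cases i <;> fin_cases c <;> fin_cases p <;> fin_cases p' <;> fin_cases r <;>
      fin_cases r' <;> simp [hd, pauliMat, sigmaX, sigmaY, sigmaZ]
  refine ⟨i = 1, u, 3, 3, c.succ, d, ?_, heq, ?_⟩
  · exact ((hcomm.smul_left _).smul_right _).eq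
  · rw [← trace_zzBlock]
    have htr : ((1/2 : ℂ) • (1 + (if u then (-1 : ℂ) else 1) • pauliMat c.succ)).trace = 1 := by
      generalize (if u then (-1 : ℂ) else 1) = ε
      fin_cases c <;> simp [Matrix.trace, Fin.sum_univ_two, pauliMat, sigmaX, sigmaY, sigmaZ] <;>
        ring
    fin_cases i <;>
      simpa [zzBlock_blockEmbed_self, zzBlock_blockEmbed_of_ne] using htr

lemma IsStab1.isStab2_blockEmbed {s : Matrix (Fin 2) (Fin 2) ℂ} (h : IsStab1 s) (i : Fin 2) :
    IsStab2 (blockEmbed i s) := by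
  obtain ⟨a, b, c, habc, rfl⟩ := h
  have hconv := convex_convexHull ℝ {τ | IsPureStab2 τ}
  have key := hconv.sum_mem (t := Finset.univ)
    (w := fun p : Fin 3 × Bool =>
      (![|a|, |b|, 1 - |a| - |b|] p.1 + (if p.2 then -1 else 1) * ![a, b, c] p.1) / 2)
    (z := fun p => blockEmbed i
      ((1/2 : ℂ) • (1 + (if p.2 then (-1 : ℂ) else 1) • pauliMat p.1.succ)))
    ?_ ?_ (fun p _ => subset_convexHull ℝ _ (isPureStab2_blockEmbed i p.2 p.1))
  · refine (congrArg IsStab2 ?_).mpr key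
    simp only [← Complex.coe_smul, ← blockEmbed_smul]
    simp only [Fintype.sum_prod_type, Fin.sum_univ_three, Fintype.sum_bool, ← blockEmbed_add]
    congr 1
    simp [pauliMat, -Complex.coe_smul]
    module
  · have := neg_abs_le a
    have := neg_abs_le b
    have := neg_abs_le c
    have := le_abs_self a
    have := le_abs_self b
    have := le_abs_self c
    rintro ⟨k, u⟩ -
    fin_cases k <;> cases u <;> simp <;> linarith
  · simp [Fintype.sum_prod_type, Fin.sum_univ_three]
    ring

lemma posSemidef_blochMat {x y : ℝ} (h : x^2 + y^2 ≤ 1) :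
    (blochMat 1 x y 0).PosSemidef := by
  set v : Fin 2 → ℂ := ![1, x + y * Complex.I] with hv
  set d : Fin 2 → ℂ := ![0, ((1 - (x^2 + y^2) : ℝ) : ℂ)] with hd
  have hdiag : (Matrix.diagonal d).PosSemidef := by
    refine Matrix.PosSemidef.diagonal fun k => ?_
    fin_cases k
    · exact le_rfl
    · exact Complex.zero_le_real.mpr (sub_nonneg.mpr h)
  have hdecomp : blochMat 1 x y 0 =
      (1/2 : ℂ) • (Matrix.vecMulVec v (star v) + Matrix.diagonal d) := by
    ext k l
    rw [Matrix.smul_apply, Matrix.add_apply, Matrix.vecMulVec_apply, Pi.star_apply]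
    fin_cases k <;> fin_cases l <;>
      simp [hv, hd, blochMat, sigmaX, sigmaY, sigmaZ]
    ring_nf
    simp
  rw [hdecomp]
  exact ((Matrix.posSemidef_vecMulVec_self_star v).add hdiag).smul (by positivity)

lemma Rob1_set_nonempty {x y : ℝ} (h : x^2 + y^2 ≤ 1) :
    {l : ℝ | 1 ≤ l ∧ ∃ s, IsStab1 s ∧ ((l : ℂ) • s - blochMat 1 x y 0).PosSemidef}.Nonempty := by
  refine ⟨2, one_le_two, blochMat 1 0 0 0, ⟨0, 0, 0, by simp, by simp [blochMat]⟩, ?_⟩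
  convert posSemidef_blochMat (x := -x) (y := -y) (by simpa using h) using 1
  simp only [blochMat]
  push_cast
  module

lemma blockEmbed_witness {q0 q1 x0 y0 x1 y1 l0 l1 : ℝ}
    (hq0 : 0 ≤ q0) (hq1 : 0 ≤ q1) (hq : q0 + q1 = 1)
    (h0 : 1 ≤ l0 ∧ ∃ s, IsStab1 s ∧ ((l0 : ℂ) • s - blochMat 1 x0 y0 0).PosSemidef)
    (h1 : 1 ≤ l1 ∧ ∃ s, IsStab1 s ∧ ((l1 : ℂ) • s - blochMat 1 x1 y1 0).PosSemidef) :
    1 ≤ q0 * l0 + q1 * l1 ∧ ∃ s, IsStab2 s ∧ (((q0 * l0 + q1 * l1 : ℝ) : ℂ) • s -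
      ((q0 : ℂ) • blockEmbed 0 (blochMat 1 x0 y0 0) +
        (q1 : ℂ) • blockEmbed 1 (blochMat 1 x1 y1 0))).PosSemidef := by
  obtain ⟨hl0, s0, hs0, hp0⟩ := h0
  obtain ⟨hl1, s1, hs1, hp1⟩ := h1
  have hl : 1 ≤ q0 * l0 + q1 * l1 := by nlinarith
  have hpos : 0 < q0 * l0 + q1 * l1 := by linarith
  refine ⟨hl, (q0 * l0 / (q0 * l0 + q1 * l1)) • blockEmbed 0 s0 +
    (q1 * l1 / (q0 * l0 + q1 * l1)) • blockEmbed 1 s1, ?_, ?_⟩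
  · refine convex_convexHull ℝ _ (hs0.isStab2_blockEmbed 0) (hs1.isStab2_blockEmbed 1)
      (by positivity) (by positivity) ?_
    rw [← add_div, div_self hpos.ne']
  · have hsum := ((hp0.blockEmbed 0).smul (Complex.zero_le_real.mpr hq0)).add
      ((hp1.blockEmbed 1).smul (Complex.zero_le_real.mpr hq1))
    convert hsum using 1
    rw [← Complex.coe_smul, ← Complex.coe_smul, smul_add, smul_smul, smul_smul,
      ← Complex.ofReal_mul, ← Complex.ofReal_mul, mul_div_cancel₀ _ hpos.ne',
      mul_div_cancel₀ _ hpos.ne']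
    simp only [blockEmbed_sub, blockEmbed_smul]
    push_cast
    module

/-- For `J = q₀ Π₀ ρ₀,L Π₀ + q₁ Π₁ ρ₁,L Π₁` with `q₀ + q₁ = 1`,
the two-qubit stabilizer robustness is additive over the blocks:
`R_F(J) = q₀ R_F(ρ₀) + q₁ R_F(ρ₁)`. -/
theorem block_additivity_of_robustness (q0 q1 x0 y0 x1 y1 : ℝ)
    (hq0 : 0 ≤ q0) (hq1 : 0 ≤ q1) (hq : q0 + q1 = 1)
    (h0 : x0^2 + y0^2 ≤ 1) (h1 : x1^2 + y1^2 ≤ 1) :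
    Rob2 ((q0 : ℂ) • encBlock 0 x0 y0 + (q1 : ℂ) • encBlock 1 x1 y1)
      = q0 * Rob1 ((1/2 : ℂ) • (1 + (x0 : ℂ) • sigmaX + (y0 : ℂ) • sigmaY))
      + q1 * Rob1 ((1/2 : ℂ) • (1 + (x1 : ℂ) • sigmaX + (y1 : ℂ) • sigmaY)) := by
  have hb (x y : ℝ) : (1/2 : ℂ) • (1 + (x : ℂ) • sigmaX + (y : ℂ) • sigmaY) =
      blochMat 1 x y 0 := by simp [blochMat]
  rw [hb, hb, encBlock_eq_blockEmbed, encBlock_eq_blockEmbed]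
  have hne0 := Rob1_set_nonempty h0
  have hne1 := Rob1_set_nonempty h1
  apply le_antisymm
  · refine le_of_forall_pos_le_add fun ε hε => ?_
    obtain ⟨l0, hl0, hlt0⟩ := exists_lt_of_csInf_lt hne0 (lt_add_of_pos_right _ hε)
    obtain ⟨l1, hl1, hlt1⟩ := exists_lt_of_csInf_lt hne1 (lt_add_of_pos_right _ hε)
    have hle : Rob2 _ ≤ _ := csInf_le ⟨1, fun _ hl => hl.1⟩
      (blockEmbed_witness hq0 hq1 hq hl0 hl1)
    refine hle.trans ?_
    calc q0 * l0 + q1 * l1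
        ≤ q0 * (Rob1 (blochMat 1 x0 y0 0) + ε) + q1 * (Rob1 (blochMat 1 x1 y1 0) + ε) :=
          add_le_add (mul_le_mul_of_nonneg_left hlt0.le hq0)
            (mul_le_mul_of_nonneg_left hlt1.le hq1)
      _ = q0 * Rob1 (blochMat 1 x0 y0 0) + q1 * Rob1 (blochMat 1 x1 y1 0) + (q0 + q1) * ε := by
          ring
      _ = _ := by rw [hq, one_mul]
  · refine le_csInf ?_ ?_
    · obtain ⟨l0, hl0⟩ := hne0
      obtain ⟨l1, hl1⟩ := hne1
      exact ⟨_, blockEmbed_witness hq0 hq1 hq hl0 hl1⟩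
    · rintro l ⟨hl, s, hs, hpsd⟩
      obtain ⟨hcone, htr⟩ := hs.zzBlock_mem_stabCone
      obtain ⟨t, a, b, c, habc, hB0⟩ := smul_mem_stabCone (zero_le_one.trans hl) (hcone 0)
      obtain ⟨t', a', b', c', habc', hB1⟩ := smul_mem_stabCone (zero_le_one.trans hl) (hcone 1)
      have hle0 : q0 * Rob1 (blochMat 1 x0 y0 0) ≤ t := by
        refine mul_Rob1_le hq0 habc ?_
        have h := hpsd.submatrix (blockIndex 0)
        change (zzBlock 0 0 _).PosSemidef at h
        simpa only [zzBlock_sub, zzBlock_add, zzBlock_smul, zzBlock_blockEmbed_self, hB0,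
          zzBlock_blockEmbed_of_ne zero_ne_one, smul_zero, add_zero] using h
      have hle1 : q1 * Rob1 (blochMat 1 x1 y1 0) ≤ t' := by
        refine mul_Rob1_le hq1 habc' ?_
        have h := hpsd.submatrix (blockIndex 1)
        change (zzBlock 1 1 _).PosSemidef at h
        simpa only [zzBlock_sub, zzBlock_add, zzBlock_smul, zzBlock_blockEmbed_self, hB1,
          zzBlock_blockEmbed_of_ne one_ne_zero, smul_zero, zero_add] using h
      have hsum : t + t' = l := by
        have h := trace_zzBlock ((l : ℂ) • s)
        rw [zzBlock_smul, zzBlock_smul, hB0, hB1, trace_blochMat, trace_blochMat,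
          Matrix.trace_smul, htr, smul_eq_mul, mul_one] at h
        exact_mod_cast h
      linarith
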